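/- Let S be a finite set of points in the plane in general position, and let a, b ∈ S with b ∈ C₁(a) and a→b a directed edge of Θ₆(S). If c ∈ S, c ≠ a, lies in the cone C(b,a) of b that contains a and satisfies ‖cb‖ < ‖ab‖, then c ∈ C₂(a) ∪ C₆(a). -/

import Mathlib

/-!
Let `f` be the component along the bisector of `C(a,b)`. The cones `C(b,a)` and `C(a,b)` are
opposite, so `c ∈ C(b,a)` puts `b` in the cone of `c` parallel to `C(a,b)`. Hence
`‖ab‖ = f (b - a)` and `‖cb‖ = f (b - c) > 0`, and by additivity `f (c - a) = ‖ab‖ - ‖cb‖` lies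
strictly between `0` and `‖ab‖`. Positivity means that `c - a` is within `π / 2` of the bisector,
which leaves only `C(a,b)` and its two neighbors for `c`; in `C(a,b)` the point `c` would be
closer to `a` than `b` is, contradicting the minimality of `b`.
-/

open Real

noncomputable section

/-- Counterclockwise angle in `[0, 2π)` from the positive x-axis to the direction of `z`. -/
def argIn (z : ℂ) : ℝ := if 0 ≤ Complex.arg z then Complex.arg z else Complex.arg z + 2 * π

/-- The half-open cone `C_i(u)` with apex `u`: points `p ≠ u` whose direction from `u` has
counterclockwise angle in `[(i-1)π/3, iπ/3)`. -/
def cone (i : ℕ) (u : ℂ) : Set ℂ :=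
  {p | p ≠ u ∧ argIn (p - u) ∈ Set.Ico (((i : ℝ) - 1) * (π / 3)) ((i : ℝ) * (π / 3))}

/-- The index `i ∈ {1, …, 6}` of the cone of `u` containing `v`. -/
def coneIdx (u v : ℂ) : ℕ := (⌊argIn (v - u) / (π / 3)⌋).toNat + 1

/-- The angle of the bisector ray of the cone of `u` containing `v`. -/
def bisAngle (u v : ℂ) : ℝ := ((coneIdx u v : ℝ) - 1) * (π / 3) + π / 6

/-- The projective distance from `u` to `v`: the Euclidean distance from `u` to the
orthogonal projection of `v` onto the bisector ray of the cone of `u` containing `v`. -/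
def projDist (u v : ℂ) : ℝ :=
  ((v - u) * Complex.exp (-(Complex.I * (bisAngle u v : ℂ)))).re

/-- `S` is in general position: no two points of `S` lie on a common line parallel to one of
the six rays from the origin at angles `jπ/3`. -/
def GenPos (S : Finset ℂ) : Prop :=
  ∀ u ∈ S, ∀ v ∈ S, u ≠ v → ∀ j : ℕ, argIn (v - u) ≠ (j : ℝ) * (π / 3)

/-- `S` is in convex position: every point of `S` is an extreme point of the convex hull. -/
def ConvexPos (S : Finset ℂ) : Prop :=
  ∀ p ∈ S, p ∈ Set.extremePoints ℝ (convexHull ℝ (S : Set ℂ))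

/-- `u → v` is a directed edge of `Θ₆(S)`: `v` minimizes the projective distance from `u`
among the points of `S` in the cone of `u` containing `v`. -/
def ThetaEdge (S : Finset ℂ) (u v : ℂ) : Prop :=
  u ∈ S ∧ v ∈ S ∧ v ≠ u ∧
    ∀ w ∈ S, w ∈ cone (coneIdx u v) u → projDist u v ≤ projDist u w

/-- `u → v` is a directed edge of `ΘΘ₆(S)`: it is an edge of `Θ₆(S)` and among all incoming
`Θ₆`-edges `w → v` with `w` in the same cone of `v` as `u`, it minimizes `‖wv‖`. -/
def ThetaThetaEdge (S : Finset ℂ) (u v : ℂ) : Prop :=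
  ThetaEdge S u v ∧
    ∀ w, ThetaEdge S w v → coneIdx v w = coneIdx v u → projDist u v ≤ projDist w v

/-- Undirected adjacency in `ΘΘ₆(S)`: paths may use edges in either direction. -/
def TTAdj (S : Finset ℂ) (u v : ℂ) : Prop := ThetaThetaEdge S u v ∨ ThetaThetaEdge S v u

/-- `p` is a path between `u` and `v` with respect to the adjacency relation `A`. -/
def IsPath (A : ℂ → ℂ → Prop) (u v : ℂ) (p : List ℂ) : Prop :=
  p.Chain' A ∧ p.head? = some u ∧ p.getLast? = some v

/-- The Euclidean length of the polygonal path through the points of `p`. -/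
def pathLength (p : List ℂ) : ℝ := (List.zipWith dist p p.tail).sum

lemma argIn_coe_angle (z : ℂ) : (argIn z : Real.Angle) = Complex.arg z := by
  unfold argIn
  split_ifs <;> simp

lemma argIn_mem_Ico (z : ℂ) : argIn z ∈ Set.Ico 0 (2 * π) := by
  have harg := Complex.arg_mem_Ioc z
  unfold argIn
  split_ifs with h <;> constructor <;> linarith [harg.1, harg.2, pi_pos]

lemma exists_argIn_neg_eq {z : ℂ} (hz : z ≠ 0) :
    ∃ k : ℤ, argIn (-z) = argIn z + π + 2 * π * k := by
  have hangle : (argIn (-z) : Real.Angle) = (argIn z + π : ℝ) := by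
    rw [argIn_coe_angle, Complex.arg_neg_coe_angle hz, Real.Angle.coe_add, argIn_coe_angle]
  obtain ⟨k, hk⟩ := Real.Angle.angle_eq_iff_two_pi_dvd_sub.mp hangle
  exact ⟨k, by linarith⟩

/-- The signed length of the orthogonal projection of `z` onto the direction with angle `θ`,
written in the form in which it occurs in `projDist`. -/
def dirComponent (θ : ℝ) (z : ℂ) : ℝ := (z * Complex.exp (-(Complex.I * (θ : ℂ)))).re

lemma dirComponent_sub (θ : ℝ) (z w : ℂ) :
    dirComponent θ (z - w) = dirComponent θ z - dirComponent θ w := by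
  simp only [dirComponent, sub_mul, Complex.sub_re]

lemma dirComponent_eq_norm_mul_cos (θ : ℝ) (z : ℂ) :
    dirComponent θ z = ‖z‖ * cos (argIn z - θ) := by
  have hcos : cos (argIn z - θ) = cos (Complex.arg z - θ) := by
    rw [← Real.Angle.cos_coe, ← Real.Angle.cos_coe, Real.Angle.coe_sub, argIn_coe_angle,
      Real.Angle.coe_sub]
  have hpolar : z * Complex.exp (-(Complex.I * (θ : ℂ))) =
      ‖z‖ * Complex.exp ((Complex.arg z - θ : ℝ) * Complex.I) := by
    nth_rw 1 [← Complex.norm_mul_exp_arg_mul_I z]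
    rw [mul_assoc, ← Complex.exp_add]
    push_cast
    ring_nf
  rw [hcos, dirComponent, hpolar, Complex.re_ofReal_mul, Complex.exp_ofReal_mul_I_re]

/-- The index of the cone obtained from `C_i` by `k` counterclockwise turns by `π / 3`. Indices
start at `1`, so this is `(i - 1 + k) mod 6 + 1`, with `5` in place of `-1` to stay in `ℕ`. -/
def rotateIdx (i k : ℕ) : ℕ := (i + k + 5) % 6 + 1

lemma coneIdx_cast (u v : ℂ) : (coneIdx u v : ℤ) = ⌊argIn (v - u) / (π / 3)⌋ + 1 := by
  have hfloor : 0 ≤ ⌊argIn (v - u) / (π / 3)⌋ :=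
    Int.floor_nonneg.mpr (div_nonneg (argIn_mem_Ico _).1 (by positivity))
  rw [coneIdx, Nat.cast_add, Int.toNat_of_nonneg hfloor, Nat.cast_one]

lemma coneIdx_eq_iff {u v : ℂ} {i : ℕ} : coneIdx u v = i ↔
    argIn (v - u) ∈ Set.Ico (((i : ℝ) - 1) * (π / 3)) ((i : ℝ) * (π / 3)) := by
  have hpi : 0 < π / 3 := by positivity
  rw [← Nat.cast_inj (R := ℤ), coneIdx_cast, ← eq_sub_iff_add_eq, Int.floor_eq_iff,
    le_div_iff₀ hpi, div_lt_iff₀ hpi, Set.mem_Ico]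
  push_cast
  rw [sub_add_cancel]

lemma mem_cone_iff {u v : ℂ} {i : ℕ} : v ∈ cone i u ↔ v ≠ u ∧ coneIdx u v = i :=
  and_congr_right fun _ => coneIdx_eq_iff.symm

lemma coneIdx_mem_Icc (u v : ℂ) : coneIdx u v ∈ Set.Icc 1 6 := by
  have hfloor : ⌊argIn (v - u) / (π / 3)⌋ < 6 := by
    rw [Int.floor_lt, div_lt_iff₀ (by positivity)]
    push_cast
    linarith [(argIn_mem_Ico (v - u)).2]
  have hcast := coneIdx_cast u v
  exact ⟨Nat.le_add_left .., by omega⟩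

lemma coneIdx_swap {u v : ℂ} (huv : u ≠ v) : coneIdx v u = rotateIdx (coneIdx u v) 3 := by
  obtain ⟨k, hk⟩ := exists_argIn_neg_eq (sub_ne_zero.mpr huv.symm)
  rw [neg_sub] at hk
  have hfloor : ⌊argIn (u - v) / (π / 3)⌋ = ⌊argIn (v - u) / (π / 3)⌋ + (3 + 6 * k) := by
    rw [← Int.floor_add_intCast, hk]
    congr 1
    push_cast
    field_simp
    ring
  have huv_cast := coneIdx_cast u v
  have hvu_cast := coneIdx_cast v u
  have hvu_mem := Set.mem_Icc.mp (coneIdx_mem_Icc v u)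
  rw [rotateIdx]
  omega

lemma coneIdx_eq_of_swap_eq {u v w : ℂ} (hu : u ≠ w) (hv : v ≠ w)
    (h : coneIdx w u = coneIdx w v) : coneIdx u w = coneIdx v w := by
  rw [coneIdx_swap hu.symm, coneIdx_swap hv.symm, h]

lemma projDist_eq_dirComponent_of_coneIdx_eq {u v u' v' : ℂ} (h : coneIdx u v = coneIdx u' v') :
    projDist u v = dirComponent (bisAngle u' v') (v - u) := by
  rw [projDist, dirComponent, bisAngle, bisAngle, h]

lemma abs_argIn_sub_bisAngle_le (u v : ℂ) : |argIn (v - u) - bisAngle u v| ≤ π / 6 := by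
  have hmem := coneIdx_eq_iff.mp (rfl : coneIdx u v = _)
  rw [bisAngle, abs_le]
  constructor <;> linarith [hmem.1, hmem.2]

lemma projDist_pos {u v : ℂ} (hvu : v ≠ u) : 0 < projDist u v := by
  have hangle := abs_le.mp (abs_argIn_sub_bisAngle_le u v)
  rw [projDist_eq_dirComponent_of_coneIdx_eq rfl, dirComponent_eq_norm_mul_cos]
  refine mul_pos (norm_pos_iff.mpr (sub_ne_zero.mpr hvu)) (cos_pos_of_mem_Ioo ⟨?_, ?_⟩) <;>
    linarith [pi_pos]

lemma dirComponent_nonpos_of_abs_coneIdx_sub_mem_Icc {u v w : ℂ}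
    (hgap : |(coneIdx u w : ℤ) - coneIdx u v| ∈ Set.Icc 2 4) :
    dirComponent (bisAngle u v) (w - u) ≤ 0 := by
  have hbis : |bisAngle u w - bisAngle u v| =
      (|(coneIdx u w : ℤ) - coneIdx u v| : ℤ) * (π / 3) := by
    rw [bisAngle, bisAngle, add_sub_add_right_eq_sub, ← sub_mul, sub_sub_sub_cancel_right,
      abs_mul, abs_of_pos (by positivity : 0 < π / 3)]
    push_cast
    rfl
  have hbis_mem : |bisAngle u w - bisAngle u v| ∈ Set.Icc (2 * (π / 3)) (4 * (π / 3)) := by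
    rw [hbis]
    constructor <;> gcongr
    · exact_mod_cast hgap.1
    · exact_mod_cast hgap.2
  have hclose : |(|argIn (w - u) - bisAngle u v|) - (|bisAngle u w - bisAngle u v|)| ≤ π / 6 :=
    (abs_abs_sub_abs_le _ _).trans <| by
      rw [sub_sub_sub_cancel_right]
      exact abs_argIn_sub_bisAngle_le u w
  have hcos : cos (argIn (w - u) - bisAngle u v) ≤ 0 := by
    rw [← cos_abs]
    apply cos_nonpos_of_pi_div_two_le_of_le <;>
      linarith [abs_le.mp hclose, hbis_mem.1, hbis_mem.2]
  rw [dirComponent_eq_norm_mul_cos]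
  exact mul_nonpos_of_nonneg_of_nonpos (norm_nonneg _) hcos

lemma coneIdx_eq_or_neighbor_of_dirComponent_pos {u v w : ℂ}
    (hpos : 0 < dirComponent (bisAngle u v) (w - u)) :
    coneIdx u w = coneIdx u v ∨ coneIdx u w = rotateIdx (coneIdx u v) 1 ∨
      coneIdx u w = rotateIdx (coneIdx u v) 5 := by
  have hgap : |(coneIdx u w : ℤ) - coneIdx u v| ∉ Set.Icc 2 4 := fun h =>
    hpos.not_ge (dirComponent_nonpos_of_abs_coneIdx_sub_mem_Icc h)
  have hv := Set.mem_Icc.mp (coneIdx_mem_Icc u v)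
  have hw := Set.mem_Icc.mp (coneIdx_mem_Icc u w)
  rw [Set.mem_Icc, le_abs, abs_le] at hgap
  rw [rotateIdx, rotateIdx]
  omega

theorem competitor_lies_in_neighbor_cone_general {S : Set ℂ} {a b c : ℂ} (hba : b ≠ a)
    (hmin : IsMinOn (projDist a) (S ∩ cone (coneIdx a b) a) b) (hc : c ∈ S)
    (hcone : c ∈ cone (coneIdx b a) b) (hlt : projDist c b < projDist a b) :
    c ∈ cone (rotateIdx (coneIdx a b) 1) a ∨ c ∈ cone (rotateIdx (coneIdx a b) 5) a := by
  have hca : c ≠ a := fun h => hlt.ne (h ▸ rfl)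
  obtain ⟨hcb, hidx⟩ := mem_cone_iff.mp hcone
  have hcomponent : dirComponent (bisAngle a b) (c - a) = projDist a b - projDist c b := by
    rw [projDist_eq_dirComponent_of_coneIdx_eq (coneIdx_eq_of_swap_eq hcb hba.symm hidx),
      projDist_eq_dirComponent_of_coneIdx_eq rfl, ← dirComponent_sub, sub_sub_sub_cancel_left]
  have hpos : 0 < dirComponent (bisAngle a b) (c - a) := hcomponent ▸ sub_pos.mpr hlt
  simp only [mem_cone_iff, ne_eq, hca, not_false_eq_true, true_and]
  refine (coneIdx_eq_or_neighbor_of_dirComponent_pos hpos).resolve_left fun hsame => ?_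
  have hle : projDist a b ≤ projDist a c := hmin ⟨hc, mem_cone_iff.mpr ⟨hca, hsame⟩⟩
  rw [projDist_eq_dirComponent_of_coneIdx_eq hsame, hcomponent] at hle
  linarith [projDist_pos hcb.symm]

/-- If `b ∈ C₁(a)`, `a → b` is an edge of `Θ₆(S)`, and `c ∈ S`, `c ≠ a`,
lies in the cone of `b` containing `a` with `‖cb‖ < ‖ab‖`, then `c ∈ C₂(a) ∪ C₆(a)`. -/
theorem competitor_lies_in_neighbor_cone (S : Finset ℂ) (hgen : GenPos S) (a b c : ℂ)
    (ha : a ∈ S) (hb : b ∈ S) (hb1 : b ∈ cone 1 a) (habT : ThetaEdge S a b)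
    (hc : c ∈ S) (hca : c ≠ a) (hcone : c ∈ cone (coneIdx b a) b)
    (hlt : projDist c b < projDist a b) :
    c ∈ cone 2 a ∨ c ∈ cone 6 a := by
  have hidx : coneIdx a b = 1 := (mem_cone_iff.mp hb1).2
  simpa [hidx, rotateIdx] using competitor_lies_in_neighbor_cone_general (S := S) hb1.1
    (fun w hw => habT.2.2.2 w hw.1 hw.2) hc hcone hlt

end
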